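/- Let R be a smooth function on a neighborhood of the origin in ℝ² with nonvanishing Taylor series, let M > 0 and α = α_M(R). Let k ≥ 1 be an integer, r ∈ ℝ, δ₀ > 0 and C₀ > 0, and suppose |d^k/dy^k [R_M(1,y)]| > C₀ for all y ∈ [r − δ₀, r + δ₀]. Then there exists δ > 0 such that |∂_y^k R(x,y)| > (C₀/2) x^{α − kM} for all (x,y) with 0 < x < δ and (r − δ₀) x^M ≤ y ≤ (r + δ₀) x^M. -/

import Mathlib

open MeasureTheory Set Filter Topology

noncomputable section

/-- Iterated partial derivative `∂ₓᵃ ∂ᵧᵇ R` at `(x, y)`. -/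
def pderiv2 (R : ℝ → ℝ → ℝ) (a b : ℕ) (x y : ℝ) : ℝ :=
  iteratedDeriv a (fun x' => iteratedDeriv b (fun y' => R x' y') y) x

/-- Taylor coefficient `R_{ab} = ∂ₓᵃ ∂ᵧᵇ R(0,0) / (a! b!)`. -/
def tcoeff (R : ℝ → ℝ → ℝ) (a b : ℕ) : ℝ :=
  pderiv2 R a b 0 0 / (Nat.factorial a * Nat.factorial b)

/-- The support of the Taylor series of `R` at the origin. -/
def tsupp (R : ℝ → ℝ → ℝ) : Set (ℕ × ℕ) := {p | tcoeff R p.1 p.2 ≠ 0}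

/-- The Newton polygon of `R`. -/
def newtonPolygon (R : ℝ → ℝ → ℝ) : Set (ℝ × ℝ) :=
  convexHull ℝ (⋃ p ∈ tsupp R, {q : ℝ × ℝ | (p.1 : ℝ) ≤ q.1 ∧ (p.2 : ℝ) ≤ q.2})

/-- The Newton distance of `R`. -/
def newtonDist (R : ℝ → ℝ → ℝ) : ℝ := sInf {t : ℝ | (t, t) ∈ newtonPolygon R}

/-- `e` is a compact edge of `N(R)` of slope `-1/M` (with `M > 0`): it is the
(one-dimensional, compact) face of the Newton polygon cut out by a supporting line
`t₁ + M t₂ = c`. -/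
def IsCompactEdge (R : ℝ → ℝ → ℝ) (M : ℝ) (e : Set (ℝ × ℝ)) : Prop :=
  0 < M ∧ ∃ c : ℝ, (∀ q ∈ newtonPolygon R, c ≤ q.1 + M * q.2) ∧
    e = {q ∈ newtonPolygon R | q.1 + M * q.2 = c} ∧
    ∃ v w : ℝ × ℝ, v ≠ w ∧ e = segment ℝ v w

/-- The edge polynomial `R_e(x,y) = Σ_{(a,b) ∈ e ∩ supp R} R_{ab} x^a y^b`. -/
def edgePoly (R : ℝ → ℝ → ℝ) (e : Set (ℝ × ℝ)) (x y : ℝ) : ℝ :=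
  ∑' p : ℕ × ℕ,
    Set.indicator {p : ℕ × ℕ | ((p.1 : ℝ), (p.2 : ℝ)) ∈ e}
      (fun p => tcoeff R p.1 p.2 * x ^ p.1 * y ^ p.2) p

/-- `p` has a zero of order exactly `m` at `y₀`. -/
def ZeroOfOrder (p : ℝ → ℝ) (m : ℕ) (y₀ : ℝ) : Prop :=
  (∀ j < m, iteratedDeriv j p y₀ = 0) ∧ iteratedDeriv m p y₀ ≠ 0

/-- `R` is in nonadapted coordinates: the bisectrix meets the interior of a compact
edge `e` such that `R_e(1, ⬝)` has a real zero of order greater than `d(R)`. -/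
def IsNonadapted (R : ℝ → ℝ → ℝ) : Prop :=
  ∃ (M : ℝ) (e : Set (ℝ × ℝ)) (v w : ℝ × ℝ), IsCompactEdge R M e ∧ v ≠ w ∧
    e = segment ℝ v w ∧ (∃ t : ℝ, (t, t) ∈ openSegment ℝ v w) ∧
    ∃ (y₀ : ℝ) (m : ℕ), newtonDist R < (m : ℝ) ∧
      ZeroOfOrder (fun y => edgePoly R e 1 y) m y₀

/-- `R` is in generic adapted coordinates: adapted coordinates, every compact edge has slope
at least `-1`, and the Newton polygon meets the `t₂`-axis. -/
def GenericAdapted (R : ℝ → ℝ → ℝ) : Prop :=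
  ¬ IsNonadapted R ∧ (∀ M e, IsCompactEdge R M e → 1 ≤ M) ∧
    ∃ t : ℝ, ((0 : ℝ), t) ∈ newtonPolygon R

/-- `α_M(R) = min {a + M b : (a,b) ∈ supp R}`. -/
def alphaM (R : ℝ → ℝ → ℝ) (M : ℝ) : ℝ :=
  sInf {t : ℝ | ∃ p ∈ tsupp R, t = (p.1 : ℝ) + M * p.2}

/-- `R_M`, the sum of the terms of the Taylor series of `R` of minimal `M`-weighted degree. -/
def RMpart (R : ℝ → ℝ → ℝ) (M : ℝ) (x y : ℝ) : ℝ :=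
  ∑' p : ℕ × ℕ,
    Set.indicator {p : ℕ × ℕ | p ∈ tsupp R ∧ (p.1 : ℝ) + M * p.2 = alphaM R M}
      (fun p => tcoeff R p.1 p.2 * x ^ p.1 * y ^ p.2) p

/-- The Hessian determinant of `f`. -/
def hessDet (f : ℝ → ℝ → ℝ) (x y : ℝ) : ℝ :=
  pderiv2 f 2 0 x y * pderiv2 f 0 2 x y - (pderiv2 f 1 1 x y) ^ 2

/-- `F*(x,y) = (Σ_{(a,b) vertex of N(F)} x^{2a} y^{2b})^{1/2}`. -/
def vertexFn (F : ℝ → ℝ → ℝ) (x y : ℝ) : ℝ :=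
  Real.sqrt (∑' p : ℕ × ℕ,
    Set.indicator
      {p : ℕ × ℕ | ((p.1 : ℝ), (p.2 : ℝ)) ∈ (newtonPolygon F).extremePoints ℝ}
      (fun p => x ^ (2 * p.1) * y ^ (2 * p.2)) p)


theorem ContDiffOn.iteratedDeriv_of_isOpen {f : ℝ → ℝ} {s : Set ℝ}
    (hf : ContDiffOn ℝ (⊤ : ℕ∞) f s) (hs : IsOpen s) (n : ℕ) :
    ContDiffOn ℝ (⊤ : ℕ∞) (iteratedDeriv n f) s := by
  induction n with
  | zero => simpa using hf
  | succ n ih =>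
    rw [iteratedDeriv_succ]
    exact ih.deriv_of_isOpen hs (by simp)

/-- The iterated partial derivatives in the second variable of a smooth function of two real
variables are smooth. -/
theorem contDiffOn_iteratedDeriv_snd {F : ℝ → ℝ → ℝ} {U : Set (ℝ × ℝ)} (hU : IsOpen U)
    (hF : ContDiffOn ℝ (⊤ : ℕ∞) (fun p : ℝ × ℝ => F p.1 p.2) U) (n : ℕ) :
    ContDiffOn ℝ (⊤ : ℕ∞) (fun p : ℝ × ℝ => iteratedDeriv n (F p.1) p.2) U := by
  induction n with
  | zero => simpa using hF
  | succ n ih =>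
    have hfd := (ih.fderiv_of_isOpen (m := (⊤ : ℕ∞)) hU (by simp)).clm_apply
      (contDiffOn_const (c := ((0 : ℝ), (1 : ℝ))))
    refine hfd.congr fun p hp => ?_
    have hd : HasFDerivAt (fun p : ℝ × ℝ => iteratedDeriv n (F p.1) p.2) _ (p.1, p.2) :=
      ((ih.contDiffAt (hU.mem_nhds hp)).differentiableAt (by simp)).hasFDerivAt
    have hline : HasDerivAt (fun y : ℝ => (p.1, y)) ((0 : ℝ), (1 : ℝ)) p.2 :=
      (hasDerivAt_const p.2 p.1).prodMk (hasDerivAt_id p.2)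
    rw [iteratedDeriv_succ]
    exact (hd.comp_hasDerivAt p.2 hline).deriv

/-- Taylor's inequality at the origin on a symmetric interval. -/
theorem abs_sub_taylor_le {ρ : ℝ} (n : ℕ) {f : ℝ → ℝ} {C : ℝ}
    (hf : ContDiffOn ℝ (⊤ : ℕ∞) f (Metric.ball 0 ρ))
    (hC : ∀ t ∈ Metric.ball (0 : ℝ) ρ, |iteratedDeriv n f t| ≤ C) {y : ℝ}
    (hy : y ∈ Metric.ball (0 : ℝ) ρ) :
    |f y - ∑ j ∈ Finset.range n, iteratedDeriv j f 0 / j.factorial * y ^ j| ≤ C * |y| ^ n := by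
  induction n generalizing f y with
  | zero => simpa using hC y hy
  | succ n ih =>
    have hC0 : 0 ≤ C := (abs_nonneg _).trans (hC y hy)
    have hbound : ∀ t ∈ Metric.ball (0 : ℝ) ρ,
        |deriv f t - ∑ j ∈ Finset.range n, iteratedDeriv (j + 1) f 0 / j.factorial * t ^ j|
          ≤ C * |t| ^ n := by
      intro t ht
      simpa only [iteratedDeriv_succ'] using
        ih (hf.deriv_of_isOpen Metric.isOpen_ball (by simp))
          (by simpa only [iteratedDeriv_succ'] using hC) ht
    have hsub : Metric.closedBall (0 : ℝ) |y| ⊆ Metric.ball 0 ρ :=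
      Metric.closedBall_subset_ball (by simpa using hy)
    have hderiv : ∀ t ∈ Metric.closedBall (0 : ℝ) |y|, HasDerivWithinAt
        (fun t => f t - ∑ j ∈ Finset.range (n + 1), iteratedDeriv j f 0 / j.factorial * t ^ j)
        (deriv f t - ∑ j ∈ Finset.range n, iteratedDeriv (j + 1) f 0 / j.factorial * t ^ j)
        (Metric.closedBall 0 |y|) t := by
      intro t ht
      have hft : HasDerivAt f (deriv f t) t :=
        ((hf.contDiffAt (Metric.isOpen_ball.mem_nhds (hsub ht))).differentiableAt
          (by simp)).hasDerivAt
      have hpoly : HasDerivAt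
          (fun t => ∑ j ∈ Finset.range (n + 1), iteratedDeriv j f 0 / j.factorial * t ^ j)
          (∑ j ∈ Finset.range (n + 1), iteratedDeriv j f 0 / j.factorial * (j * t ^ (j - 1))) t :=
        HasDerivAt.fun_sum fun j _ => (hasDerivAt_pow j t).const_mul _
      have hsum : ∑ j ∈ Finset.range (n + 1),
            iteratedDeriv j f 0 / j.factorial * (j * t ^ (j - 1))
          = ∑ j ∈ Finset.range n, iteratedDeriv (j + 1) f 0 / j.factorial * t ^ j := by
        rw [Finset.sum_range_succ']
        simp only [Nat.cast_zero, zero_mul, mul_zero, add_zero, Nat.add_sub_cancel]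
        refine Finset.sum_congr rfl fun j _ => ?_
        rw [Nat.factorial_succ]
        push_cast
        field_simp
      exact (hft.sub (hsum ▸ hpoly)).hasDerivWithinAt
    have hmv := (convex_closedBall (0 : ℝ) |y|).norm_image_sub_le_of_norm_hasDerivWithin_le
      (C := C * |y| ^ n) hderiv (fun t ht => (hbound t (hsub ht)).trans (by
        have : |t| ≤ |y| := by simpa using ht
        gcongr)) (x := 0) (y := y) (by simp) (by simp)
    have hzero : f 0 - ∑ j ∈ Finset.range (n + 1),
        iteratedDeriv j f 0 / j.factorial * (0 : ℝ) ^ j = 0 := by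
      simp [Finset.sum_range_succ']
    rw [hzero, sub_zero, sub_zero, Real.norm_eq_abs, Real.norm_eq_abs] at hmv
    rwa [pow_succ, ← mul_assoc]

theorem exists_abs_sub_taylor_le {ρ : ℝ} {f : ℝ → ℝ} (hρ : 0 < ρ)
    (hf : ContDiffOn ℝ (⊤ : ℕ∞) f (Metric.ball 0 ρ)) (n : ℕ) :
    ∃ C, 0 ≤ C ∧ ∀ x, |x| < ρ / 2 →
      |f x - ∑ j ∈ Finset.range n, iteratedDeriv j f 0 / j.factorial * x ^ j| ≤ C * |x| ^ n := by
  have hsub : Metric.closedBall (0 : ℝ) (ρ / 2) ⊆ Metric.ball 0 ρ :=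
    Metric.closedBall_subset_ball (by linarith)
  obtain ⟨C, hC⟩ := (isCompact_closedBall (0 : ℝ) (ρ / 2)).exists_bound_of_continuousOn
    ((hf.iteratedDeriv_of_isOpen Metric.isOpen_ball n).continuousOn.mono hsub)
  refine ⟨C, (norm_nonneg _).trans (hC 0 (by simp; positivity)), fun x hx => ?_⟩
  exact abs_sub_taylor_le (ρ := ρ / 2) n
    (hf.mono (Metric.ball_subset_closedBall.trans hsub))
    (fun t ht => hC t (Metric.ball_subset_closedBall ht)) (by simpa using hx)

/-- Taylor's inequality in two variables, with the Taylor polynomial truncated separately in each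
variable. -/
theorem exists_abs_sub_taylor_two_le {ρ : ℝ} {F : ℝ → ℝ → ℝ} (hρ : 0 < ρ)
    (hF : ContDiffOn ℝ (⊤ : ℕ∞) (fun p : ℝ × ℝ => F p.1 p.2) (Metric.ball 0 ρ)) (n : ℕ) :
    ∃ C, 0 ≤ C ∧ ∀ x y, |x| < ρ / 2 → |y| < ρ / 2 →
      |F x y - ∑ b ∈ Finset.range n, ∑ a ∈ Finset.range n,
        tcoeff F a b * x ^ a * y ^ b| ≤ C * (|x| ^ n + |y| ^ n) := by
  have hmem : ∀ x y : ℝ, ((x, y) : ℝ × ℝ) ∈ Metric.ball (0 : ℝ × ℝ) ρ ↔ |x| < ρ ∧ |y| < ρ := by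
    simp [Prod.norm_def]
  have hsub : Metric.closedBall (0 : ℝ × ℝ) (ρ / 2) ⊆ Metric.ball 0 ρ :=
    Metric.closedBall_subset_ball (by linarith)
  have hsm := contDiffOn_iteratedDeriv_snd Metric.isOpen_ball hF
  obtain ⟨C, hC⟩ := (isCompact_closedBall (0 : ℝ × ℝ) (ρ / 2)).exists_bound_of_continuousOn
    ((hsm n).continuousOn.mono hsub)
  have hC0 : 0 ≤ C := (norm_nonneg _).trans (hC 0 (by simp; positivity))
  have hcoef : ∀ b : ℕ, ∃ D, 0 ≤ D ∧ ∀ x, |x| < ρ / 2 →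
      |iteratedDeriv b (F x) 0 - ∑ a ∈ Finset.range n, pderiv2 F a b 0 0 / a.factorial * x ^ a|
        ≤ D * |x| ^ n := fun b =>
    exists_abs_sub_taylor_le hρ ((hsm b).comp
      (contDiff_id.prodMk contDiff_const : ContDiff ℝ _ fun x : ℝ => (x, (0 : ℝ))).contDiffOn
      fun x hx => (hmem x 0).2 ⟨by simpa using hx, by simpa using hρ⟩) n
  choose D hD0 hD using hcoef
  refine ⟨C + ∑ b ∈ Finset.range n, D b / b.factorial * (ρ / 2) ^ b,
    add_nonneg hC0 (Finset.sum_nonneg fun b _ => by have := hD0 b; positivity),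
    fun x y hx hy => ?_⟩
  have hy' : |F x y - ∑ b ∈ Finset.range n, iteratedDeriv b (F x) 0 / b.factorial * y ^ b|
      ≤ C * |y| ^ n := by
    refine abs_sub_taylor_le (ρ := ρ / 2) n (hF.comp
      (contDiff_const.prodMk contDiff_id : ContDiff ℝ _ fun y : ℝ => (x, y)).contDiffOn
      fun t ht => (hmem x t).2 ?_) (fun t ht => hC (x, t) ?_) (by simpa using hy)
    · have : |t| < ρ / 2 := by simpa using ht
      constructor <;> linarith
    · have : |t| < ρ / 2 := by simpa using ht
      simpa [Prod.norm_def] using ⟨hx.le, this.le⟩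
  have hx' : |∑ b ∈ Finset.range n, iteratedDeriv b (F x) 0 / b.factorial * y ^ b
      - ∑ b ∈ Finset.range n, ∑ a ∈ Finset.range n, tcoeff F a b * x ^ a * y ^ b|
      ≤ (∑ b ∈ Finset.range n, D b / b.factorial * (ρ / 2) ^ b) * |x| ^ n := by
    rw [← Finset.sum_sub_distrib, Finset.sum_mul]
    refine (Finset.abs_sum_le_sum_abs _ _).trans (Finset.sum_le_sum fun b _ => ?_)
    have heq : iteratedDeriv b (F x) 0 / b.factorial * y ^ b
        - ∑ a ∈ Finset.range n, tcoeff F a b * x ^ a * y ^ b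
        = (iteratedDeriv b (F x) 0
          - ∑ a ∈ Finset.range n, pderiv2 F a b 0 0 / a.factorial * x ^ a)
          * (y ^ b / b.factorial) := by
      rw [sub_mul, Finset.sum_mul]
      congr 1
      · ring
      · refine Finset.sum_congr rfl fun a _ => ?_
        rw [tcoeff]
        field_simp
    rw [heq, abs_mul, abs_div, abs_pow, Nat.abs_cast]
    calc _ ≤ (D b * |x| ^ n) * ((ρ / 2) ^ b / b.factorial) := by
          have := hD0 b
          gcongr
          exact hD b x hx
      _ = _ := by ring
  refine (abs_sub_le _ _ _).trans ((add_le_add hy' hx').trans ?_)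
  have hS : 0 ≤ ∑ b ∈ Finset.range n, D b / b.factorial * (ρ / 2) ^ b :=
    Finset.sum_nonneg fun b _ => by have := hD0 b; positivity
  have h1 : 0 ≤ |x| ^ n := by positivity
  have h2 : 0 ≤ |y| ^ n := by positivity
  nlinarith [mul_nonneg hC0 h1, mul_nonneg hS h2]

theorem tcoeff_iteratedDeriv_snd (R : ℝ → ℝ → ℝ) (k a b : ℕ) :
    tcoeff (fun x y => iteratedDeriv k (R x) y) a b
      = tcoeff R a (b + k) * (b + k).descFactorial k := by
  have hp : pderiv2 (fun x y => iteratedDeriv k (R x) y) a b 0 0 = pderiv2 R a (b + k) 0 0 := by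
    simp only [pderiv2]
    congr 1
    ext x
    simp only [iteratedDeriv_eq_iterate, Function.iterate_add_apply]
  have hfac : ((b + k).factorial : ℝ) = b.factorial * (b + k).descFactorial k := by
    have := Nat.factorial_mul_descFactorial (Nat.le_add_left k b)
    rw [Nat.add_sub_cancel] at this
    exact_mod_cast this.symm
  have hb : (b.factorial : ℝ) ≠ 0 := by positivity
  have ha : (a.factorial : ℝ) ≠ 0 := by positivity
  have hd : ((b + k).descFactorial k : ℝ) ≠ 0 := by
    have := Nat.descFactorial_eq_zero_iff_lt.not.2 (Nat.le_add_left k b).not_gt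
    exact_mod_cast this
  rw [tcoeff, tcoeff, hp, hfac]
  field_simp

theorem alphaM_le {R : ℝ → ℝ → ℝ} {M : ℝ} (hM : 0 ≤ M) {a b : ℕ} (h : tcoeff R a b ≠ 0) :
    alphaM R M ≤ a + M * b :=
  csInf_le ⟨0, by rintro _ ⟨p, -, rfl⟩; positivity⟩ ⟨(a, b), h, rfl⟩

theorem RMpart_one_eq_sum {R : ℝ → ℝ → ℝ} {M : ℝ} (hM : 0 < M) {n m : ℕ}
    (hn : alphaM R M < n) (hm : alphaM R M < M * m) (y : ℝ) :
    RMpart R M 1 y = ∑ b ∈ Finset.range m, ∑ a ∈ Finset.range n,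
      (if (a : ℝ) + M * b = alphaM R M then tcoeff R a b else 0) * y ^ b := by
  rw [RMpart, tsum_eq_sum (s := Finset.range n ×ˢ Finset.range m), Finset.sum_product_right]
  · refine Finset.sum_congr rfl fun b _ => Finset.sum_congr rfl fun a _ => ?_
    by_cases h : (a : ℝ) + M * b = alphaM R M <;> by_cases h0 : tcoeff R a b = 0 <;>
      simp [Set.indicator, tsupp, h, h0]
  · rintro ⟨a, b⟩ hab
    refine Set.indicator_of_notMem ?_ _
    rintro ⟨-, heq⟩
    simp only at heq
    refine hab (Finset.mem_product.2 ⟨Finset.mem_range.2 ?_, Finset.mem_range.2 ?_⟩)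
    · have : (a : ℝ) < n := by
        have : 0 ≤ M * b := by positivity
        linarith
      exact_mod_cast this
    · have : M * b < M * m := by
        have : (0 : ℝ) ≤ a := by positivity
        linarith
      exact_mod_cast lt_of_mul_lt_mul_left this hM.le

theorem iteratedDeriv_RMpart_one {R : ℝ → ℝ → ℝ} {M : ℝ} (hM : 0 < M) {n : ℕ} (k : ℕ)
    (hn : alphaM R M < n) (hn' : alphaM R M < M * n) (t : ℝ) :
    iteratedDeriv k (fun y => RMpart R M 1 y) t
      = ∑ b ∈ Finset.range n, ∑ a ∈ Finset.range n,
        if (a : ℝ) + M * b = alphaM R M - k * M then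
          tcoeff (fun x y => iteratedDeriv k (R x) y) a b * t ^ b else 0 := by
  have hm : alphaM R M < M * ((k + n : ℕ) : ℝ) := by
    push_cast
    have : 0 ≤ M * k := by positivity
    linarith
  simp only [RMpart_one_eq_sum hM hn hm]
  rw [iteratedDeriv_fun_sum fun b _ => by fun_prop]
  simp_rw [← Finset.sum_mul, iteratedDeriv_const_mul_field, iteratedDeriv_pow]
  rw [Finset.sum_range_add, Finset.sum_eq_zero, zero_add]
  · refine Finset.sum_congr rfl fun b _ => ?_
    rw [Finset.sum_mul]
    refine Finset.sum_congr rfl fun a _ => ?_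
    have hiff : (a : ℝ) + M * ((b + k : ℕ) : ℝ) = alphaM R M
        ↔ (a : ℝ) + M * b = alphaM R M - k * M := by
      push_cast
      constructor <;> intro h <;> linarith
    simp only [add_comm k b, hiff, tcoeff_iteratedDeriv_snd, Nat.add_sub_cancel]
    split_ifs
    · ring
    · simp
  · intro b hb
    rw [Nat.descFactorial_eq_zero_iff_lt.2 (Finset.mem_range.1 hb)]
    simp

theorem tendsto_rpow_nhdsGT_zero {c : ℝ} (hc : 0 < c) :
    Tendsto (fun x : ℝ => x ^ c) (𝓝[>] 0) (𝓝 0) := by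
  have h := (Real.continuousAt_rpow_const 0 c (Or.inr hc.le)).tendsto
  rw [Real.zero_rpow hc.ne'] at h
  exact h.mono_left nhdsWithin_le_nhds

/-- Along the curves `y = t * x ^ M`, a polynomial whose monomials have `M`-weighted degree at
least `β` is approximated, uniformly for bounded `t`, by its part of weighted degree `β`. -/
theorem eventually_abs_weighted_sum_sub_le {q : ℕ → ℕ → ℝ} {M β K ε : ℝ}
    (hq : ∀ a b, q a b ≠ 0 → β ≤ a + M * b) (hε : 0 < ε) (n : ℕ) :
    ∀ᶠ x : ℝ in 𝓝[>] 0, ∀ t, |t| ≤ K →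
      |∑ b ∈ Finset.range n, ∑ a ∈ Finset.range n, q a b * x ^ a * (t * x ^ M) ^ b
        - x ^ β * ∑ b ∈ Finset.range n, ∑ a ∈ Finset.range n,
          if (a : ℝ) + M * b = β then q a b * t ^ b else 0| ≤ ε * x ^ β := by
  have hlim : Tendsto (fun x : ℝ => ∑ b ∈ Finset.range n, ∑ a ∈ Finset.range n,
      |q a b| * K ^ b * if β < a + M * b then x ^ (a + M * b - β) else 0) (𝓝[>] 0)
      (𝓝 (∑ b ∈ Finset.range n, ∑ a ∈ Finset.range n, |q a b| * K ^ b * 0)) := by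
    refine tendsto_finsetSum _ fun b _ => tendsto_finsetSum _ fun a _ =>
      Tendsto.const_mul _ ?_
    split_ifs with h
    · exact tendsto_rpow_nhdsGT_zero (sub_pos.2 h)
    · exact tendsto_const_nhds
  simp only [mul_zero, Finset.sum_const_zero] at hlim
  filter_upwards [hlim.eventually_le_const hε, self_mem_nhdsWithin] with x hx hx0 t ht
  have hx0 : 0 < x := hx0
  have hK : 0 ≤ K := (abs_nonneg t).trans ht
  rw [mul_comm ε]
  refine le_trans ?_ (mul_le_mul_of_nonneg_left hx (Real.rpow_nonneg hx0.le β))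
  rw [Finset.mul_sum, Finset.mul_sum, ← Finset.sum_sub_distrib]
  refine (Finset.abs_sum_le_sum_abs _ _).trans (Finset.sum_le_sum fun b _ => ?_)
  rw [Finset.mul_sum, Finset.mul_sum, ← Finset.sum_sub_distrib]
  refine (Finset.abs_sum_le_sum_abs _ _).trans (Finset.sum_le_sum fun a _ => ?_)
  have hpow : x ^ a * (x ^ M) ^ b = x ^ β * x ^ (a + M * b - β) := by
    rw [← Real.rpow_add hx0, add_sub_cancel, Real.rpow_add hx0, Real.rpow_natCast,
      Real.rpow_mul hx0.le, Real.rpow_natCast]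
  have hterm : q a b * x ^ a * (t * x ^ M) ^ b
      = x ^ β * (q a b * t ^ b * x ^ (a + M * b - β)) := by
    rw [mul_pow]
    linear_combination q a b * t ^ b * hpow
  rw [hterm, ← mul_sub, abs_mul, abs_of_nonneg (Real.rpow_nonneg hx0.le β)]
  refine mul_le_mul_of_nonneg_left ?_ (Real.rpow_nonneg hx0.le β)
  by_cases hqab : q a b = 0
  · simp [hqab]
  rcases (hq a b hqab).eq_or_lt with heq | hlt
  · simp [← heq]
  · rw [if_neg hlt.ne', if_pos hlt, sub_zero, abs_mul, abs_mul, abs_pow,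
      abs_of_nonneg (Real.rpow_nonneg hx0.le _)]
    gcongr

/-- Equation (2.19): if the `k`-th `y`-derivative of `R_M(1,⬝)` is bounded below on
`[r-δ₀, r+δ₀]`, then `|∂_y^k R(x,y)| > (C₀/2) x^{α-kM}` on the corresponding sliver. -/
theorem stmt_6 (R : ℝ → ℝ → ℝ) (U₀ : Set (ℝ × ℝ)) (hU₀ : U₀ ∈ 𝓝 ((0 : ℝ), (0 : ℝ)))
    (hsm : ContDiffOn ℝ (⊤ : ℕ∞) (fun p : ℝ × ℝ => R p.1 p.2) U₀)
    (hts : (tsupp R).Nonempty)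
    (M : ℝ) (hM : 0 < M) (k : ℕ) (hk : 1 ≤ k) (r δ₀ C₀ : ℝ) (hδ₀ : 0 < δ₀) (hC₀ : 0 < C₀)
    (hlow : ∀ y ∈ Set.Icc (r - δ₀) (r + δ₀),
      C₀ < |iteratedDeriv k (fun y' => RMpart R M 1 y') y|) :
    ∃ δ > (0 : ℝ), ∀ x y : ℝ,
      0 < x → x < δ → (r - δ₀) * x ^ M ≤ y → y ≤ (r + δ₀) * x ^ M →
      C₀ / 2 * x ^ (alphaM R M - k * M) < |pderiv2 R 0 k x y| := by
  set β := alphaM R M - k * M with hβ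
  set G : ℝ → ℝ → ℝ := fun x y => iteratedDeriv k (R x) y with hG
  set K := |r| + δ₀ with hK
  have hK0 : 0 ≤ K := by positivity
  obtain ⟨ρ, hρ, hball⟩ := Metric.mem_nhds_iff.1 hU₀
  have hGsm : ContDiffOn ℝ (⊤ : ℕ∞) (fun p : ℝ × ℝ => G p.1 p.2) (Metric.ball 0 ρ) :=
    contDiffOn_iteratedDeriv_snd Metric.isOpen_ball (hsm.mono hball) k
  obtain ⟨n, hn⟩ := exists_nat_gt (max (alphaM R M) (alphaM R M / M))
  have hn1 : alphaM R M < n := (le_max_left _ _).trans_lt hn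
  have hn2 : alphaM R M < M * n := (div_lt_iff₀' hM).1 ((le_max_right _ _).trans_lt hn)
  have hβα : β ≤ alphaM R M := by
    have : 0 ≤ k * M := by positivity
    linarith
  obtain ⟨C, hC0, hC⟩ := exists_abs_sub_taylor_two_le hρ hGsm n
  have hmain := eventually_abs_weighted_sum_sub_le (q := tcoeff G) (M := M) (β := β) (K := K)
    (ε := C₀ / 4) (fun a b h => by
      rw [hG, tcoeff_iteratedDeriv_snd] at h
      have := alphaM_le hM.le (left_ne_zero_of_mul h)
      push_cast at this
      linarith) (by positivity) n
  have herr : Tendsto (fun x : ℝ => C * (x ^ (n - β) + K ^ n * x ^ (M * n - β))) (𝓝[>] 0)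
      (𝓝 (C * (0 + K ^ n * 0))) :=
    ((tendsto_rpow_nhdsGT_zero (by linarith)).add
      ((tendsto_rpow_nhdsGT_zero (by linarith)).const_mul _)).const_mul _
  have hKM : Tendsto (fun x : ℝ => K * x ^ M) (𝓝[>] 0) (𝓝 (K * 0)) :=
    (tendsto_rpow_nhdsGT_zero hM).const_mul K
  simp only [mul_zero, add_zero] at herr hKM
  have hev : ∀ᶠ x : ℝ in 𝓝[>] 0, ∀ y, (r - δ₀) * x ^ M ≤ y → y ≤ (r + δ₀) * x ^ M →
      C₀ / 2 * x ^ β < |pderiv2 R 0 k x y| := by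
    filter_upwards [hmain, herr.eventually_le_const (show 0 < C₀ / 4 by positivity),
      hKM.eventually_lt_const (half_pos hρ), self_mem_nhdsWithin,
      nhdsWithin_le_nhds (eventually_lt_nhds (half_pos hρ))]
      with x hx1 hx2 hx3 hx4 hx5 y hy1 hy2
    have hx0 : 0 < x := hx4
    have hxM : 0 < x ^ M := Real.rpow_pos_of_pos hx0 M
    have hxβ : 0 < x ^ β := Real.rpow_pos_of_pos hx0 β
    obtain ⟨t, rfl⟩ : ∃ t, y = t * x ^ M := ⟨y / x ^ M, by field_simp⟩
    have ht1 : r - δ₀ ≤ t := le_of_mul_le_mul_right hy1 hxM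
    have ht2 : t ≤ r + δ₀ := le_of_mul_le_mul_right hy2 hxM
    have ht : |t| ≤ K := abs_le.2 ⟨by linarith [neg_abs_le r], by linarith [le_abs_self r]⟩
    have hyK : |t * x ^ M| ≤ K * x ^ M := by
      rw [abs_mul, abs_of_pos hxM]
      gcongr
    have htaylor := hC x (t * x ^ M) (by rwa [abs_of_pos hx0]) (hyK.trans_lt hx3)
    have hremainder : C * (|x| ^ n + |t * x ^ M| ^ n) ≤ C₀ / 4 * x ^ β := by
      have hsplit : x ^ n + (K * x ^ M) ^ n
          = (x ^ (n - β) + K ^ n * x ^ (M * n - β)) * x ^ β := by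
        rw [add_mul (x ^ (n - β)), mul_assoc, ← Real.rpow_add hx0, ← Real.rpow_add hx0,
          sub_add_cancel, sub_add_cancel, mul_pow, Real.rpow_natCast, Real.rpow_mul hx0.le,
          Real.rpow_natCast]
      calc C * (|x| ^ n + |t * x ^ M| ^ n) ≤ C * (x ^ n + (K * x ^ M) ^ n) := by
            rw [abs_of_pos hx0]
            gcongr
        _ = C * (x ^ (n - β) + K ^ n * x ^ (M * n - β)) * x ^ β := by rw [hsplit, mul_assoc]
        _ ≤ C₀ / 4 * x ^ β := by gcongr
    have hweighted := hx1 t ht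
    have hlow' := hlow t ⟨ht1, ht2⟩
    rw [iteratedDeriv_RMpart_one hM k hn1 hn2] at hlow'
    have hlow'' := mul_lt_mul_of_pos_left hlow' hxβ
    rw [← abs_of_pos hxβ, ← abs_mul, abs_of_pos hxβ] at hlow''
    have hpd : pderiv2 R 0 k x (t * x ^ M) = G x (t * x ^ M) := by simp [pderiv2, hG]
    rw [hpd]
    have htri := (abs_sub_le _ _ _).trans
      (add_le_add (htaylor.trans hremainder) hweighted)
    have := abs_sub_abs_le_abs_sub (x ^ β * ∑ b ∈ Finset.range n, ∑ a ∈ Finset.range n,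
      if (a : ℝ) + M * b = β then tcoeff G a b * t ^ b else 0) (G x (t * x ^ M))
    rw [abs_sub_comm (x ^ β * _)] at this
    linarith
  obtain ⟨δ, hδ, hδ'⟩ := mem_nhdsGT_iff_exists_Ioo_subset.1 hev
  exact ⟨δ, hδ, fun x y hx0 hxδ => hδ' ⟨hx0, hxδ⟩ y⟩

end
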